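/- Let p be an odd prime, n ≥ 1, q = p^(2^n), and G = PGL₂(F_q). Fix an involution x ∈ G not lying in the image of SL₂(F_q) in G. Then the number of subgroups of G isomorphic to the dihedral group of order 2(q−1) that contain x is exactly (q+1)/2. -/

import Mathlib

open Matrix

/-- `PGL₂(F)`: the projective general linear group, i.e. the quotient of `GL₂(F)`
by its center. -/
abbrev ProjectiveGL2 (F : Type) [Field F] : Type :=
  Matrix.GeneralLinearGroup (Fin 2) F ⧸ Subgroup.center (Matrix.GeneralLinearGroup (Fin 2) F)

/-- The image of the natural map `SL₂(F) → PGL₂(F)`: the socle of `PGL₂(F)`,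
isomorphic to `PSL₂(F)`. -/
def socleSL2 (F : Type) [Field F] : Subgroup (ProjectiveGL2 F) :=
  ((QuotientGroup.mk' (Subgroup.center (Matrix.GeneralLinearGroup (Fin 2) F))).comp
    Matrix.SpecialLinearGroup.toGL).range

/-!
`PGL₂(F)` acts on the projective line doubly transitively; an element fixing three points is trivial
and an element swapping two points is an involution. Such an action determines the dihedral
subgroups of order `2(q - 1)`: a rotation of order `q - 1 ≥ 3` permutes its moved points in cycles
of length `q - 1`, so among the `q + 1` points exactly two are fixed, and the dihedral subgroup,
which conjugates the rotation to itself or its inverse, is the full stabilizer of this pair.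
Conversely each stabilizer of a pair is such a dihedral group. Hence the count is that of the pairs
of points invariant under `x`. If `x` fixes `f ≤ 2` of the `q + 1` points, there are
`(q + 1 - f) / 2` pairs swapped by `x` and `f.choose 2` pairs fixed pointwise, and in each of the
cases `f = 0, 1, 2` the sum is `⌊(q + 1) / 2⌋`.
-/

lemma mul_self_ne_one_of_three_le_orderOf {M : Type*} [Monoid M] {g : M} (hg : 3 ≤ orderOf g) :
    g * g ≠ 1 := fun h ↦ by
  have := orderOf_le_of_pow_eq_one two_pos ((sq g).trans h)
  omega

section Dihedral

variable {K : Type*} [Group K]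

lemma mul_eq_mul_inv_of_mul_self_eq_one {w c : K} (hw : w * w = 1) (hwc : w * c * (w * c) = 1) :
    c * w = w * c⁻¹ := by
  rw [eq_mul_inv_iff_mul_eq, ← mul_left_cancel_iff (a := w), hw, ← hwc]
  simp only [mul_assoc]

lemma nonempty_mulEquiv_dihedralGroup {C : Subgroup K} [IsCyclic C] (hC : C.index = 2)
    (hinv : ∀ g ∉ C, g * g = 1) : Nonempty (K ≃* DihedralGroup (Nat.card C)) := by
  let φ : Multiplicative (ZMod (Nat.card C)) ≃* C := zmodCyclicMulEquiv ‹_›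
  obtain ⟨w, hw⟩ : ∃ w, w ∉ C := by
    by_contra! h
    simp [(Subgroup.eq_top_iff' C).2 h] at hC
  have hwC (c : C) : w * c ∉ C := fun h ↦ hw ((C.mul_mem_cancel_right c.2).1 h)
  have hcomm (c : C) : (c : K) * w = w * (c : K)⁻¹ :=
    mul_eq_mul_inv_of_mul_self_eq_one (hinv w hw) (hinv _ (hwC c))
  let f : DihedralGroup (Nat.card C) →* K := MonoidHom.mk'
    (fun d ↦ match d with
      | .r i => φ (.ofAdd i)
      | .sr i => w * φ (.ofAdd i)) <| by
    rintro (i | i) (j | j)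
    · simp [ofAdd_add]
    · simp [sub_eq_neg_add, ofAdd_add, ofAdd_neg, ← mul_assoc, hcomm]
    · simp [ofAdd_add, mul_assoc]
    · rw [mul_assoc w, ← mul_assoc _ w, hcomm, mul_assoc w, ← mul_assoc w w, hinv w hw, one_mul]
      simp [sub_eq_neg_add, ofAdd_add, ofAdd_neg]
  have hr (i) : f (.r i) = φ (.ofAdd i) := rfl
  have hsr (i) : f (.sr i) = w * φ (.ofAdd i) := rfl
  refine ⟨(MulEquiv.ofBijective f ⟨(injective_iff_map_eq_one f).2 ?_, fun g ↦ ?_⟩).symm⟩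
  · rintro (i | i) h
    · rw [hr, OneMemClass.coe_eq_one, MulEquiv.map_eq_one_iff] at h
      exact congrArg DihedralGroup.r h
    · exact absurd (hsr i ▸ h ▸ C.one_mem) (hwC _)
  · by_cases hg : g ∈ C
    · exact ⟨.r (φ.symm ⟨g, hg⟩).toAdd, by simp [hr]⟩
    · have hwg : w⁻¹ * g ∈ C := by simp [Subgroup.mul_mem_iff_of_index_two hC, hw, hg]
      exact ⟨.sr (φ.symm ⟨_, hwg⟩).toAdd, by simp [hsr]⟩

lemma dihedralGroup_conj_r_one_eq_or_eq_inv {n : ℕ} (d : DihedralGroup n) :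
    d * .r 1 * d⁻¹ = .r 1 ∨ d * .r 1 * d⁻¹ = (.r 1)⁻¹ := by
  rcases d with i | i <;> simp

lemma orderOf_coe_symm_r_one {n : ℕ} {H : Subgroup K} (e : H ≃* DihedralGroup n) :
    orderOf (e.symm (.r 1) : K) = n := by
  rw [Subgroup.orderOf_coe, MulEquiv.orderOf_eq, DihedralGroup.orderOf_r_one]

end Dihedral

section Counting

lemma ncard_eq_mul_ncard_image {α β : Type*} {s : Set α} (hs : s.Finite) {f : α → β} {k : ℕ}
    (hf : ∀ a ∈ s, {b ∈ s | f b = f a}.ncard = k) : s.ncard = k * (f '' s).ncard := by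
  classical
  lift s to Finset α using hs
  rw [← Finset.coe_image, Set.ncard_coe_finset, Set.ncard_coe_finset,
    Finset.card_eq_sum_card_image f, Finset.sum_const_nat, mul_comm]
  simp only [Finset.forall_mem_image]
  intro a ha
  rw [← hf a ha, ← Set.ncard_coe_finset, Finset.coe_filter]
  rfl

variable {α : Type*} {f : α → α}

lemma setOf_ncard_eq_two_and_image_eq (hf : f.Involutive) :
    {s : Set α | s.ncard = 2 ∧ f '' s = s} =
      (fun a ↦ {a, f a}) '' (Function.fixedPoints f)ᶜ ∪
        {s | s ⊆ Function.fixedPoints f ∧ s.ncard = 2} := by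
  ext s
  constructor
  · rintro ⟨hs, hfs⟩
    obtain ⟨a, b, hab, rfl⟩ := Set.ncard_eq_two.1 hs
    rw [Set.image_pair, Set.pair_eq_pair_iff] at hfs
    rcases hfs with ⟨ha, hb⟩ | ⟨ha, -⟩
    · exact .inr ⟨Set.pair_subset ha hb, hs⟩
    · exact .inl ⟨a, fun h ↦ hab (h.symm.trans ha), by simp only [ha]⟩
  · rintro (⟨a, ha, rfl⟩ | ⟨hs, hs2⟩)
    · exact ⟨Set.ncard_pair fun h ↦ ha h.symm, by rw [Set.image_pair, hf a, Set.pair_comm]⟩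
    · exact ⟨hs2, (Set.image_congr hs).trans (Set.image_id s)⟩

lemma ncard_compl_fixedPoints_of_involutive [Finite α] (hf : f.Involutive) :
    (Function.fixedPoints f)ᶜ.ncard =
      2 * ((fun a ↦ ({a, f a} : Set α)) '' (Function.fixedPoints f)ᶜ).ncard := by
  refine ncard_eq_mul_ncard_image (Set.toFinite _) fun a ha ↦ ?_
  have hfiber : {b ∈ (Function.fixedPoints f)ᶜ | ({b, f b} : Set α) = {a, f a}} = {a, f a} := by
    ext b
    simp only [Set.mem_ofPred_eq, Set.pair_eq_pair_iff, Set.mem_insert_iff, Set.mem_singleton_iff]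
    constructor
    · rintro ⟨-, h | h⟩ <;> simp [h.1]
    · rintro (rfl | rfl)
      · exact ⟨ha, by simp⟩
      · exact ⟨fun h ↦ ha (hf.injective h), by simp [hf a]⟩
  rw [hfiber, Set.ncard_pair fun h ↦ ha h.symm]

lemma ncard_pairs_image_eq_self [Finite α] (hf : f.Involutive) :
    {s : Set α | s.ncard = 2 ∧ f '' s = s}.ncard =
      (Function.fixedPoints f)ᶜ.ncard / 2 + (Function.fixedPoints f).ncard.choose 2 := by
  rw [setOf_ncard_eq_two_and_image_eq hf, Set.ncard_union_eq, Set.ncard_powerset_ncard,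
    ncard_compl_fixedPoints_of_involutive hf, Nat.mul_div_cancel_left _ two_pos]
  · exact Set.toFinite _
  · rw [Set.disjoint_left]
    rintro _ ⟨a, ha, rfl⟩ ⟨hs, -⟩
    exact ha (hs (Set.mem_insert _ _))

lemma ncard_pairs_image_eq_self_of_ncard_fixedPoints_le_two [Finite α] (hf : f.Involutive)
    (hfix : (Function.fixedPoints f).ncard ≤ 2) :
    {s : Set α | s.ncard = 2 ∧ f '' s = s}.ncard = Nat.card α / 2 := by
  rw [ncard_pairs_image_eq_self hf, ← Set.ncard_add_ncard_compl (Function.fixedPoints f)]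
  have := ncard_compl_fixedPoints_of_involutive hf
  interval_cases (Function.fixedPoints f).ncard <;> simp only [Nat.choose] <;> omega

end Counting

lemma dvd_card_support_of_forall_pow_apply_eq {α : Type*} [Fintype α] [DecidableEq α]
    {σ : Equiv.Perm α} {n : ℕ} (h : ∀ k b, σ b ≠ b → (σ ^ k) b = b → n ∣ k) :
    n ∣ σ.support.card := by
  rw [← Equiv.Perm.sum_cycleType]
  refine Multiset.dvd_sum fun m hm ↦ ?_
  obtain ⟨c, τ, rfl, hdisj, hc, rfl⟩ := Equiv.Perm.mem_cycleType_iff.1 hm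
  obtain ⟨b, hb, -⟩ := id hc
  have hτ : τ b = b := (hdisj b).resolve_left hb
  refine h _ b (by simpa [hτ] using hb) ?_
  rw [hdisj.commute.mul_pow, ← hc.orderOf, pow_orderOf_eq_one, one_mul]
  exact Equiv.Perm.pow_apply_eq_self_of_apply_eq_self hτ _

section Pairs

open MulAction
open scoped Pointwise

variable {G α : Type*} [Group G] [MulAction G α]

lemma mem_stabilizer_pair_iff {g : G} {a b : α} : g ∈ stabilizer G ({a, b} : Set α) ↔
    g • a = a ∧ g • b = b ∨ g • a = b ∧ g • b = a := by
  rw [mem_stabilizer_iff, ← Set.image_smul, Set.image_pair, Set.pair_eq_pair_iff]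

lemma mem_fixingSubgroup_pair_iff {g : G} {a b : α} :
    g ∈ fixingSubgroup G ({a, b} : Set α) ↔ g • a = a ∧ g • b = b := by
  simp [mem_fixingSubgroup_iff]

lemma isMultiplyPretransitive_two_of_exists (a₀ b₀ : α)
    (h : ∀ a b : α, a ≠ b → ∃ g : G, g • a₀ = a ∧ g • b₀ = b) :
    IsMultiplyPretransitive G α 2 := by
  refine is_two_pretransitive_iff.2 fun {a b c d} hab hcd ↦ ?_
  obtain ⟨g, rfl, rfl⟩ := h a b hab
  obtain ⟨k, rfl, rfl⟩ := h c d hcd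
  exact ⟨k * g⁻¹, by simp [mul_smul]⟩

lemma nonempty_stabilizer_mulEquiv_of_ncard_eq_two [hG : IsMultiplyPretransitive G α 2]
    {s t : Set α} (hs : s.ncard = 2) (ht : t.ncard = 2) :
    Nonempty (stabilizer G s ≃* stabilizer G t) := by
  obtain ⟨a, b, hab, rfl⟩ := Set.ncard_eq_two.1 hs
  obtain ⟨c, d, hcd, rfl⟩ := Set.ncard_eq_two.1 ht
  obtain ⟨g, rfl, rfl⟩ := is_two_pretransitive_iff.1 hG hab hcd
  exact ⟨stabilizerEquivStabilizer (g := g) (by rw [← Set.image_smul, Set.image_pair])⟩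

lemma le_stabilizer_fixedBy_rotation {n : ℕ} {H : Subgroup G} (e : H ≃* DihedralGroup n) :
    H ≤ stabilizer G (fixedBy α (e.symm (.r 1) : G)) := by
  intro h hh
  lift h to H using hh
  set γ : H := e.symm (.r 1) with hγ
  have hconj : h * γ * h⁻¹ = γ ∨ h * γ * h⁻¹ = γ⁻¹ := by
    simpa [hγ, ← e.injective.eq_iff] using dihedralGroup_conj_r_one_eq_or_eq_inv (e h)
  rw [mem_stabilizer_iff, smul_fixedBy]
  rcases hconj with hconj | hconj <;> norm_cast <;> simp [hconj]

end Pairs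

/-- The action of `G` on `α` shares two features with the action of `PGL₂` on the projective line:
an element fixing three distinct points is trivial, and an element swapping two distinct points is
an involution. Double transitivity is not included; it is assumed separately where needed. -/
class IsMoebiusAction (G α : Type*) [Group G] [MulAction G α] : Prop where
  eq_one_of_smul_eq_self : ∀ {g : G} {a b c : α}, a ≠ b → a ≠ c → b ≠ c →
    g • a = a → g • b = b → g • c = c → g = 1
  mul_self_of_swap : ∀ {g : G} {a b : α}, a ≠ b → g • a = b → g • b = a → g * g = 1

namespace IsMoebiusAction

open MulAction
open scoped Pointwise

variable {G α : Type*} [Group G] [MulAction G α]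

lemma of_pair [hG : IsMultiplyPretransitive G α 2] {a₀ b₀ : α} (h₀ : a₀ ≠ b₀)
    (hfix : ∀ (g : G) (c : α), a₀ ≠ c → b₀ ≠ c → g • a₀ = a₀ → g • b₀ = b₀ → g • c = c → g = 1)
    (hswap : ∀ g : G, g • a₀ = b₀ → g • b₀ = a₀ → g * g = 1) : IsMoebiusAction G α where
  eq_one_of_smul_eq_self {g a b c} hab hac hbc ha hb hc := by
    obtain ⟨t, rfl, rfl⟩ := is_two_pretransitive_iff.1 hG h₀ hab
    rw [← conj_eq_one_iff (a := t⁻¹), inv_inv]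
    apply hfix _ (t⁻¹ • c) <;> simp [mul_smul, ha, hb, hc, eq_inv_smul_iff, hac, hbc]
  mul_self_of_swap {g a b} hab ha hb := by
    obtain ⟨t, rfl, rfl⟩ := is_two_pretransitive_iff.1 hG h₀ hab
    rw [← conj_eq_one_iff (a := t⁻¹), ← conj_mul, inv_inv]
    apply hswap <;> simp [mul_smul, ha, hb]

variable [IsMoebiusAction G α] {g : G} {N : ℕ}

lemma ncard_fixedBy_le_two (hg : g ≠ 1) : (fixedBy α g).ncard ≤ 2 := by
  by_contra! h
  obtain ⟨a, ha, b, hb, c, hc, hab, hac, hbc⟩ :=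
    (Set.two_lt_ncard (Set.finite_of_ncard_pos (by omega))).1 h
  exact hg (eq_one_of_smul_eq_self hab hac hbc ha hb hc)

lemma fixedBy_eq_of_mem_stabilizer {s : Set α} (hs : s.ncard = 2) (hg : g ∈ stabilizer G s)
    (hg2 : g * g ≠ 1) : fixedBy α g = s := by
  obtain ⟨a, b, hab, rfl⟩ := Set.ncard_eq_two.1 hs
  obtain ⟨ha, hb⟩ := (mem_stabilizer_pair_iff.1 hg).resolve_right
    fun h ↦ hg2 (mul_self_of_swap hab h.1 h.2)
  ext c
  simp only [mem_fixedBy, Set.mem_insert_iff, Set.mem_singleton_iff]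
  refine ⟨fun hc ↦ ?_, by rintro (rfl | rfl) <;> assumption⟩
  by_contra! hc'
  exact hg2 (by simp [eq_one_of_smul_eq_self hab hc'.1.symm hc'.2.symm ha hb hc])

lemma orderOf_dvd_of_pow_smul_eq_self (hg2 : g * g ≠ 1) {b : α} (hb : g • b ≠ b) {k : ℕ}
    (hk : g ^ k • b = b) : orderOf g ∣ k := by
  have hk' {c : α} (hc : g ^ k • c = c) : g ^ k • g • c = g • c := by
    rw [smul_smul, ← pow_succ, pow_succ', mul_smul, hc]
  refine orderOf_dvd_of_pow_eq_one (eq_one_of_smul_eq_self hb.symm ?_ ?_ hk (hk' hk) (hk' (hk' hk)))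
  · exact fun h ↦ hg2 (mul_self_of_swap hb.symm rfl h.symm)
  · exact fun h ↦ hb (smul_left_cancel g h.symm)

lemma orderOf_dvd_ncard_compl_fixedBy [Finite α] (hg2 : g * g ≠ 1) :
    orderOf g ∣ (fixedBy α g)ᶜ.ncard := by
  classical
  have := Fintype.ofFinite α
  have hsupp : (fixedBy α g)ᶜ = ((toPerm g : Equiv.Perm α).support : Set α) := by
    ext; simp
  rw [hsupp, Set.ncard_coe_finset]
  refine dvd_card_support_of_forall_pow_apply_eq fun k b hb hk ↦ ?_
  refine orderOf_dvd_of_pow_smul_eq_self hg2 hb ?_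
  rwa [← toPermHom_apply, ← map_pow] at hk

lemma ncard_fixedBy_of_orderOf (hα : Nat.card α = N + 2) (hN : 3 ≤ N)
    (hg : orderOf g = N) : (fixedBy α g).ncard = 2 := by
  have : Finite α := Nat.finite_of_card_ne_zero (by omega)
  have hg2 : g * g ≠ 1 := mul_self_ne_one_of_three_le_orderOf (hg ▸ hN)
  have hle : (fixedBy α g).ncard ≤ 2 := ncard_fixedBy_le_two fun h ↦ hg2 (by simp [h])
  have hadd := Set.ncard_add_ncard_compl (fixedBy α g)
  have hdvd : N ∣ 2 - (fixedBy α g).ncard := by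
    have h := hg ▸ orderOf_dvd_ncard_compl_fixedBy (α := α) hg2
    rwa [show (fixedBy α g)ᶜ.ncard = N + (2 - (fixedBy α g).ncard) by omega,
      Nat.dvd_add_right (dvd_refl N)] at h
  have := Nat.eq_zero_of_dvd_of_lt hdvd (by omega)
  omega

lemma nonempty_stabilizer_pair_mulEquiv_dihedralGroup [hG : IsMultiplyPretransitive G α 2]
    {a b : α} (hab : a ≠ b) [IsCyclic (fixingSubgroup G {a, b})] :
    Nonempty (stabilizer G ({a, b} : Set α) ≃*
      DihedralGroup (Nat.card (fixingSubgroup G {a, b}))) := by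
  have hle : fixingSubgroup G {a, b} ≤ stabilizer G ({a, b} : Set α) := fun g hg ↦
    mem_stabilizer_pair_iff.2 (.inl (mem_fixingSubgroup_pair_iff.1 hg))
  let C := (fixingSubgroup G {a, b}).subgroupOf (stabilizer G ({a, b} : Set α))
  let e : C ≃* fixingSubgroup G {a, b} := Subgroup.subgroupOfEquivOfLe hle
  have : IsCyclic C := e.isCyclic.2 inferInstance
  obtain ⟨w, hwa, hwb⟩ := is_two_pretransitive_iff.1 hG hab hab.symm
  have hindex : C.index = 2 := by
    refine Subgroup.relIndex_eq_two_iff_exists_notMem_and.2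
      ⟨w, mem_stabilizer_pair_iff.2 (.inr ⟨hwa, hwb⟩), ?_, fun g hg ↦ ?_⟩
    · exact fun hw ↦ hab ((mem_fixingSubgroup_pair_iff.1 hw).1.symm.trans hwa)
    · simp only [mem_fixingSubgroup_pair_iff, mul_smul, hwa, hwb]
      exact (mem_stabilizer_pair_iff.1 hg).symm.imp And.symm id
  have hinv : ∀ g ∉ C, g * g = 1 := fun g hg ↦ by
    have h := (mem_stabilizer_pair_iff.1 g.2).resolve_left
      fun h ↦ hg (Subgroup.mem_subgroupOf.2 (mem_fixingSubgroup_pair_iff.2 h))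
    exact Subtype.ext (mul_self_of_swap hab h.1 h.2)
  exact Nat.card_congr e.toEquiv ▸ nonempty_mulEquiv_dihedralGroup hindex hinv

lemma setOf_mulEquiv_dihedralGroup_eq_image_stabilizer (hα : Nat.card α = N + 2) (hN : 3 ≤ N)
    (hstab : ∀ s : Set α, s.ncard = 2 → Nonempty (stabilizer G s ≃* DihedralGroup N)) :
    {H : Subgroup G | Nonempty (H ≃* DihedralGroup N)} =
      stabilizer G '' {s : Set α | s.ncard = 2} := by
  ext H
  refine ⟨fun ⟨e⟩ ↦ ?_, by rintro ⟨s, hs, rfl⟩; exact hstab s hs⟩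
  have hs : (fixedBy α (e.symm (.r 1) : G)).ncard = 2 :=
    ncard_fixedBy_of_orderOf hα hN (orderOf_coe_symm_r_one e)
  obtain ⟨e'⟩ := hstab _ hs
  have hcard := Nat.card_congr (e.trans e'.symm).toEquiv
  have : Finite (stabilizer G (fixedBy α (e.symm (.r 1) : G))) :=
    Nat.finite_of_card_ne_zero (by rw [Nat.card_congr e'.toEquiv, DihedralGroup.nat_card]; omega)
  exact ⟨_, hs, (Subgroup.eq_of_le_of_card_ge (le_stabilizer_fixedBy_rotation e) hcard.ge).symm⟩

lemma injOn_stabilizer (hN : 3 ≤ N)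
    (hstab : ∀ s : Set α, s.ncard = 2 → Nonempty (stabilizer G s ≃* DihedralGroup N)) :
    Set.InjOn (stabilizer G) {s : Set α | s.ncard = 2} := by
  intro s hs t ht hst
  obtain ⟨e⟩ := hstab s hs
  let γ : stabilizer G s := e.symm (.r 1)
  have hγ : (γ : G) * γ ≠ 1 := by
    rw [← orderOf_coe_symm_r_one e] at hN
    exact mul_self_ne_one_of_three_le_orderOf hN
  rw [← fixedBy_eq_of_mem_stabilizer hs γ.2 hγ, ← fixedBy_eq_of_mem_stabilizer ht (hst ▸ γ.2) hγ]

theorem ncard_dihedralGroup_mem [IsMultiplyPretransitive G α 2] {a b : α} (hab : a ≠ b)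
    [IsCyclic (fixingSubgroup G {a, b})] (hN : Nat.card (fixingSubgroup G {a, b}) = N)
    (hN3 : 3 ≤ N) (hα : Nat.card α = N + 2) {x : G} (hx : orderOf x = 2) :
    {H : Subgroup G | Nonempty (H ≃* DihedralGroup N) ∧ x ∈ H}.ncard = Nat.card α / 2 := by
  have : Finite α := Nat.finite_of_card_ne_zero (by omega)
  have hstab (s : Set α) (hs : s.ncard = 2) : Nonempty (stabilizer G s ≃* DihedralGroup N) := by
    obtain ⟨e⟩ := nonempty_stabilizer_mulEquiv_of_ncard_eq_two (G := G) hs (Set.ncard_pair hab)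
    exact (hN ▸ nonempty_stabilizer_pair_mulEquiv_dihedralGroup hab).map e.trans
  have himage : {H : Subgroup G | Nonempty (H ≃* DihedralGroup N) ∧ x ∈ H} =
      stabilizer G '' {s : Set α | s.ncard = 2 ∧ (x • ·) '' s = s} :=
    calc
      _ = stabilizer G '' {s : Set α | s.ncard = 2} ∩ {H | x ∈ H} := by
        rw [← setOf_mulEquiv_dihedralGroup_eq_image_stabilizer hα hN3 hstab]; rfl
      _ = _ := (Set.image_inter_preimage _ _ _).symm
  have hx2 : x * x = 1 := by rw [← sq, ← hx, pow_orderOf_eq_one]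
  have hx1 : x ≠ 1 := fun h ↦ by simp [h] at hx
  have hinv : Function.Involutive (x • · : α → α) := fun a ↦ by simp [smul_smul, hx2]
  rw [himage, ((injOn_stabilizer hN3 hstab).mono fun s hs ↦ hs.1).ncard_image]
  exact ncard_pairs_image_eq_self_of_ncard_fixedPoints_le_two hinv (ncard_fixedBy_le_two hx1)

end IsMoebiusAction

namespace ProjectiveGL2

open OnePoint MulAction

variable {F : Type} [Field F]

lemma mem_center_GL_iff {g : GL (Fin 2) F} :
    g ∈ Subgroup.center (GL (Fin 2) F) ↔ g 0 1 = 0 ∧ g 1 0 = 0 ∧ g 0 0 = g 1 1 := by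
  rw [Matrix.GeneralLinearGroup.mem_center_iff_val_mem_range_scalar]
  constructor
  · rintro ⟨a, ha⟩
    simp [← ha]
  · rintro ⟨h01, h10, h00⟩
    refine ⟨g 0 0, ?_⟩
    ext i j
    fin_cases i <;> fin_cases j <;> simp [h01, h10, h00]

lemma apply_self_ne_zero_of_apply_one_zero_eq_zero {g : GL (Fin 2) F} (h10 : g 1 0 = 0) :
    g 0 0 ≠ 0 ∧ g 1 1 ≠ 0 := by
  have hdet := g.det_ne_zero
  rwa [det_fin_two, h10, mul_zero, sub_zero, mul_ne_zero_iff] at hdet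

/-- The class of `diag(t, 1)`, as a homomorphism from the torus `Fˣ` onto the pointwise stabilizer
of `∞` and `0`. -/
def diag : Fˣ →* ProjectiveGL2 F where
  toFun t := QuotientGroup.mk (GeneralLinearGroup.mkOfDetNeZero !![(t : F), 0; 0, 1] (by simp))
  map_one' := by
    rw [QuotientGroup.eq_one_iff, mem_center_GL_iff]
    simp [GeneralLinearGroup.mkOfDetNeZero]
  map_mul' s t := by
    rw [← QuotientGroup.mk_mul]
    congr 1
    ext i j
    fin_cases i <;> fin_cases j <;> simp [GeneralLinearGroup.mkOfDetNeZero]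

lemma diag_injective : Function.Injective (diag (F := F)) := by
  refine (injective_iff_map_eq_one _).2 fun t ht ↦ Units.ext ?_
  exact (mem_center_GL_iff.1 ((QuotientGroup.eq_one_iff _).1 ht)).2.2

variable [DecidableEq F]

lemma smul_infty_eq_zero_iff {g : GL (Fin 2) F} :
    g • (∞ : OnePoint F) = (0 : F) ↔ g 0 0 = 0 := by
  have hdet := g.det_ne_zero
  rw [det_fin_two] at hdet
  by_cases h10 : g 1 0 = 0 <;> simp_all [smul_infty_eq_ite]

lemma smul_zero_eq_infty_iff {g : GL (Fin 2) F} :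
    g • ((0 : F) : OnePoint F) = ∞ ↔ g 1 1 = 0 := by
  simp [smul_some_eq_ite]

lemma smul_zero_eq_self_iff {g : GL (Fin 2) F} :
    g • ((0 : F) : OnePoint F) = (0 : F) ↔ g 0 1 = 0 := by
  have hdet := g.det_ne_zero
  rw [det_fin_two] at hdet
  by_cases h11 : g 1 1 = 0 <;> simp_all [smul_some_eq_ite]

lemma smul_coe_of_diagonal {g : GL (Fin 2) F} (h10 : g 1 0 = 0) (h01 : g 0 1 = 0) (k : F) :
    g • (k : OnePoint F) = ((g 0 0 / g 1 1 * k : F) : OnePoint F) := by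
  simp [smul_some_eq_ite, h10, h01, div_mul_eq_mul_div,
    (apply_self_ne_zero_of_apply_one_zero_eq_zero h10).2]

lemma smul_of_mem_center {g : GL (Fin 2) F} (hg : g ∈ Subgroup.center (GL (Fin 2) F))
    (a : OnePoint F) : g • a = a := by
  obtain ⟨h01, h10, h00⟩ := mem_center_GL_iff.1 hg
  cases a with
  | infty => exact smul_infty_eq_self_iff.2 h10
  | coe k =>
    have h11 : g 1 1 ≠ 0 := (apply_self_ne_zero_of_apply_one_zero_eq_zero h10).2
    rw [smul_coe_of_diagonal h10 h01, h00, div_self h11, one_mul]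

instance : MulAction (ProjectiveGL2 F) (OnePoint F) :=
  MulAction.compHom _ <| QuotientGroup.lift (Subgroup.center (GL (Fin 2) F))
    (toPermHom (GL (Fin 2) F) (OnePoint F)) fun _ hg ↦ Equiv.ext (smul_of_mem_center hg)

lemma mk_smul (g : GL (Fin 2) F) (a : OnePoint F) :
    (QuotientGroup.mk g : ProjectiveGL2 F) • a = g • a := rfl

lemma exists_smul_infty_zero {a b : OnePoint F} (hab : a ≠ b) :
    ∃ g : ProjectiveGL2 F, g • (∞ : OnePoint F) = a ∧ g • ((0 : F) : OnePoint F) = b := by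
  suffices ∃ A : Matrix (Fin 2) (Fin 2) F, ∃ hA : A.det ≠ 0,
      GeneralLinearGroup.mkOfDetNeZero A hA • (∞ : OnePoint F) = a ∧
        GeneralLinearGroup.mkOfDetNeZero A hA • ((0 : F) : OnePoint F) = b by
    obtain ⟨A, hA, h⟩ := this
    exact ⟨QuotientGroup.mk (GeneralLinearGroup.mkOfDetNeZero A hA), h⟩
  simp only [smul_infty_eq_ite, smul_some_eq_ite, GeneralLinearGroup.mkOfDetNeZero]
  cases a with
  | infty =>
    cases b with
    | infty => exact absurd rfl hab
    | coe b => exact ⟨!![1, b; 0, 1], by simp, by simp⟩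
  | coe a =>
    cases b with
    | infty => exact ⟨!![a, 1; 1, 0], by simp, by simp⟩
    | coe b => exact ⟨!![a, b; 1, 1], by simpa [sub_eq_zero] using hab, by simp⟩

instance : IsMultiplyPretransitive (ProjectiveGL2 F) (OnePoint F) 2 :=
  isMultiplyPretransitive_two_of_exists _ _ fun _ _ ↦ exists_smul_infty_zero

instance : IsMoebiusAction (ProjectiveGL2 F) (OnePoint F) := by
  refine .of_pair (infty_ne_coe (0 : F)) ?_ ?_ <;>
    refine fun g ↦ QuotientGroup.induction_on g fun A ↦ ?_
  · intro c hc₁ hc₀ h₁ h₀ hc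
    have h10 : A 1 0 = 0 := smul_infty_eq_self_iff.1 h₁
    have h01 : A 0 1 = 0 := smul_zero_eq_self_iff.1 h₀
    lift c to F using hc₁.symm
    obtain ⟨h00, h11⟩ := apply_self_ne_zero_of_apply_one_zero_eq_zero h10
    have hc0 : c ≠ 0 := by rintro rfl; exact hc₀ rfl
    rw [mk_smul, smul_coe_of_diagonal h10 h01, coe_eq_coe, mul_eq_right₀ hc0,
      div_eq_one_iff_eq h11] at hc
    exact (QuotientGroup.eq_one_iff A).2 (mem_center_GL_iff.2 ⟨h01, h10, hc⟩)
  · intro h₁ h₀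
    have h00 : A 0 0 = 0 := smul_infty_eq_zero_iff.1 h₁
    have h11 : A 1 1 = 0 := smul_zero_eq_infty_iff.1 h₀
    rw [← QuotientGroup.mk_mul, QuotientGroup.eq_one_iff, mem_center_GL_iff]
    simp [Matrix.mul_apply, Fin.sum_univ_two, h00, h11, mul_comm]

lemma range_diag : (diag (F := F)).range =
    fixingSubgroup (ProjectiveGL2 F) {(∞ : OnePoint F), ((0 : F) : OnePoint F)} := by
  ext g
  rw [mem_fixingSubgroup_pair_iff]
  constructor
  · rintro ⟨t, rfl⟩
    exact ⟨smul_infty_eq_self_iff.2 rfl, smul_zero_eq_self_iff.2 rfl⟩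
  · refine QuotientGroup.induction_on g fun A ⟨h₁, h₀⟩ ↦ ?_
    have h10 : A 1 0 = 0 := smul_infty_eq_self_iff.1 h₁
    have h01 : A 0 1 = 0 := smul_zero_eq_self_iff.1 h₀
    obtain ⟨h00, h11⟩ := apply_self_ne_zero_of_apply_one_zero_eq_zero h10
    refine ⟨Units.mk0 (A 0 0 / A 1 1) (div_ne_zero h00 h11), ?_⟩
    rw [← inv_mul_eq_one, ← map_inv]
    refine (QuotientGroup.eq_one_iff _).2 (mem_center_GL_iff.2 ?_)
    simp [GeneralLinearGroup.mkOfDetNeZero, Matrix.mul_apply, h10, h01, h00]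

lemma card_fixingSubgroup_infty_zero [Fintype F] :
    Nat.card (fixingSubgroup (ProjectiveGL2 F) {(∞ : OnePoint F), ((0 : F) : OnePoint F)}) =
      Fintype.card F - 1 := by
  rw [← range_diag, ← Nat.card_congr (MonoidHom.ofInjective diag_injective).toEquiv,
    Nat.card_eq_fintype_card, Fintype.card_units]

instance [Finite F] :
    IsCyclic (fixingSubgroup (ProjectiveGL2 F) {(∞ : OnePoint F), ((0 : F) : OnePoint F)}) := by
  rw [← range_diag]
  exact isCyclic_of_surjective diag.rangeRestrict diag.rangeRestrict_surjective

end ProjectiveGL2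

/-- Here `/` rounds down: for even `q` the value is `q / 2`. -/
theorem count_dihedral_2q_minus_2_containing_outer_involution_general
    (F : Type) [Field F] [Fintype F] (hF : 3 < Fintype.card F)
    (x : ProjectiveGL2 F) (hx : orderOf x = 2) :
    {H : Subgroup (ProjectiveGL2 F) |
        Nonempty (H ≃* DihedralGroup (Fintype.card F - 1)) ∧ x ∈ H}.ncard
      = (Fintype.card F + 1) / 2 := by
  classical
  have hcard : Nat.card (OnePoint F) = Fintype.card F + 1 := by
    rw [Nat.card_eq_fintype_card]
    exact Fintype.card_option
  rw [← hcard]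
  exact IsMoebiusAction.ncard_dihedralGroup_mem (OnePoint.infty_ne_coe (0 : F))
    ProjectiveGL2.card_fixingSubgroup_infty_zero (by omega) (by omega) hx

/-- An outer involution `x` of `PGL₂(q)` lies in exactly `(q+1)/2` subgroups
isomorphic to the dihedral group of order `2(q-1)`. -/
theorem count_dihedral_2q_minus_2_containing_outer_involution (p n : ℕ) (hp : Nat.Prime p) (hodd : Odd p) (hn : 1 ≤ n)
    (F : Type) [Field F] [Fintype F] (hF : Fintype.card F = p ^ 2 ^ n)
    (x : ProjectiveGL2 F) (hx : orderOf x = 2) (hxS : x ∉ socleSL2 F) :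
    {H : Subgroup (ProjectiveGL2 F) |
        Nonempty (H ≃* DihedralGroup (p ^ 2 ^ n - 1)) ∧ x ∈ H}.ncard
      = (p ^ 2 ^ n + 1) / 2 := by
  have hp3 : 3 ≤ p := hp.two_le.lt_of_ne fun h ↦ by
    simp [← h, Nat.odd_iff] at hodd
  have hq : 3 < p ^ 2 ^ n :=
    calc 3 < 3 ^ 2 ^ 1 := by norm_num
      _ ≤ p ^ 2 ^ n := by gcongr <;> omega
  exact hF ▸ count_dihedral_2q_minus_2_containing_outer_involution_general F (hF ▸ hq) x hx
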